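/- Let F be a homogeneous Farey recursive function with values in ℂ, let β_0 and α be normalised pairs which are Farey neighbours, and for n ≥ 0 set β_n = β_0 + n·α (componentwise). Let κ ∈ ℂ with κ ≠ 0 and κ² = F(α)² − 4, and set m = −F(α). Then for every integer n ≥ 0, F(β_n) = [ (2F(β_1) − F(β_0)(m − κ))·(m + κ)^n + (F(β_0)(m + κ) − 2F(β_1))·(m − κ)^n ] / (2^{n+1} κ). -/

import Mathlib

/-- A normalised pair `(p, q) ∈ ℤ × ℤ` representing an extended rational: `gcd(p,q) = 1`
and either `q > 0`, or `q = 0` and `p = 1` (representing `∞`). -/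
def Normalised (x : ℤ × ℤ) : Prop :=
  Int.gcd x.1 x.2 = 1 ∧ (0 < x.2 ∨ (x.2 = 0 ∧ x.1 = 1))

/-- Two pairs `(p,q)` and `(r,s)` are Farey neighbours if `|ps − qr| = 1`.
Their mediant is the componentwise sum `(p+r, q+s)`. -/
def FareyNbr (x y : ℤ × ℤ) : Prop := (x.1 * y.2 - x.2 * y.1).natAbs = 1

/-- `F` is a homogeneous Farey recursive function:
`F((γ ⊕ α) ⊕ α) = −F(γ) − F(α)·F(γ ⊕ α)` for Farey neighbours `γ, α`. -/
def IsHomFareyRecursive (F : ℤ × ℤ → ℂ) : Prop :=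
  ∀ γ α : ℤ × ℤ, Normalised γ → Normalised α → FareyNbr γ α →
    F (γ + α + α) = -F γ - F α * F (γ + α)

/-!
Adding `α` to a Farey neighbour `γ` of `α` leaves the determinant `p s - q r` unchanged, so every
`γ + n • α` is again a normalised neighbour of `α`, and `n ↦ F (γ + n • α)` satisfies
`x (n + 2) = -F α * x (n + 1) - x n`. If `r` and `s` are the roots of the characteristic
polynomial, then `x (n + 1) - s * x n` is geometric with ratio `r` and `x (n + 1) - r * x n` is
geometric with ratio `s`; subtracting the two eliminates `x (n + 1)`.
-/

section LinearRecurrence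

variable {R : Type*} [CommRing R] {x : ℕ → R}

theorem sub_mul_eq_pow_mul_of_linear_recurrence {r s : R}
    (hx : ∀ n, x (n + 2) = (r + s) * x (n + 1) - r * s * x n) (n : ℕ) :
    x (n + 1) - s * x n = r ^ n * (x 1 - s * x 0) := by
  induction n with
  | zero => ring
  | succ n ih => linear_combination hx n + r * ih

theorem binet_of_linear_recurrence {r s : R}
    (hx : ∀ n, x (n + 2) = (r + s) * x (n + 1) - r * s * x n) (n : ℕ) :
    (r - s) * x n = r ^ n * (x 1 - s * x 0) - s ^ n * (x 1 - r * x 0) := by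
  have hx_swap (k : ℕ) : x (k + 2) = (s + r) * x (k + 1) - s * r * x k := by
    rw [hx, add_comm r, mul_comm r]
  linear_combination sub_mul_eq_pow_mul_of_linear_recurrence hx n -
    sub_mul_eq_pow_mul_of_linear_recurrence hx_swap n

theorem binet_of_sq_eq_discrim {m q κ : R} (hκ : κ ^ 2 = m ^ 2 - 4 * q)
    (hx : ∀ n, x (n + 2) = m * x (n + 1) - q * x n) (n : ℕ) :
    2 ^ (n + 1) * κ * x n =
      (2 * x 1 - x 0 * (m - κ)) * (m + κ) ^ n + (x 0 * (m + κ) - 2 * x 1) * (m - κ) ^ n := by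
  -- Rescaling by `2 ^ n` doubles the characteristic roots to `m ± κ`, so no division by `2` occurs.
  have rescaled (k : ℕ) : 2 ^ (k + 2) * x (k + 2) =
      ((m + κ) + (m - κ)) * (2 ^ (k + 1) * x (k + 1)) - (m + κ) * (m - κ) * (2 ^ k * x k) := by
    linear_combination 2 ^ (k + 2) * hx k - 2 ^ k * x k * hκ
  linear_combination binet_of_linear_recurrence (x := fun k ↦ 2 ^ k * x k) rescaled n

end LinearRecurrence

section FareyNeighbours

variable {γ α : ℤ × ℤ}

theorem FareyNbr.add_left (h : FareyNbr γ α) : FareyNbr (γ + α) α := by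
  have det_eq : (γ + α).1 * α.2 - (γ + α).2 * α.1 = γ.1 * α.2 - γ.2 * α.1 := by
    simp only [Prod.fst_add, Prod.snd_add]
    ring
  rwa [FareyNbr, det_eq]

theorem FareyNbr.gcd_eq_one_left (h : FareyNbr γ α) : Int.gcd γ.1 γ.2 = 1 := by
  have gcd_dvd_det : (Int.gcd γ.1 γ.2 : ℤ) ∣ γ.1 * α.2 - γ.2 * α.1 :=
    dvd_sub ((Int.gcd_dvd_left ..).mul_right _) ((Int.gcd_dvd_right ..).mul_right _)
  exact Nat.dvd_one.mp (h ▸ Int.natCast_dvd.mp gcd_dvd_det)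

theorem FareyNbr.snd_add_pos (h : FareyNbr γ α) (hγ : 0 ≤ γ.2) (hα : 0 ≤ α.2) :
    0 < (γ + α).2 := by
  refine (add_nonneg hγ hα).lt_of_ne' fun hsum ↦ ?_
  obtain ⟨hγ0, hα0⟩ := (add_eq_zero_iff_of_nonneg hγ hα).mp hsum
  simp [FareyNbr, hγ0, hα0] at h

theorem Normalised.snd_nonneg (hγ : Normalised γ) : 0 ≤ γ.2 :=
  hγ.2.elim le_of_lt fun hinfty ↦ hinfty.1.ge

theorem Normalised.add (hγ : Normalised γ) (hα : Normalised α) (h : FareyNbr γ α) :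
    Normalised (γ + α) :=
  ⟨h.add_left.gcd_eq_one_left, .inl (h.snd_add_pos hγ.snd_nonneg hα.snd_nonneg)⟩

theorem FareyNbr.add_nsmul_left (h : FareyNbr γ α) (n : ℕ) : FareyNbr (γ + n • α) α := by
  induction n with
  | zero => simpa using h
  | succ n ih => simpa only [succ_nsmul, add_assoc] using ih.add_left

theorem Normalised.add_nsmul (hγ : Normalised γ) (hα : Normalised α) (h : FareyNbr γ α) (n : ℕ) :
    Normalised (γ + n • α) := by
  induction n with
  | zero => simpa using hγ
  | succ n ih => simpa only [succ_nsmul, add_assoc] using ih.add hα (h.add_nsmul_left n)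

theorem IsHomFareyRecursive.apply_add_nsmul_add_two {F : ℤ × ℤ → ℂ} (hF : IsHomFareyRecursive F)
    (hγ : Normalised γ) (hα : Normalised α) (h : FareyNbr γ α) (n : ℕ) :
    F (γ + (n + 2) • α) = -F α * F (γ + (n + 1) • α) - F (γ + n • α) := by
  have hrec := hF _ α (hγ.add_nsmul hα h n) hα (h.add_nsmul_left n)
  simp only [add_assoc, ← succ_nsmul] at hrec
  linear_combination hrec

end FareyNeighbours

/-- Closed form for a homogeneous Farey recursive function along the constant-difference
sequence `β_n = β_0 + n·α`, where `κ² = F(α)² − 4`, `κ ≠ 0`, and `m = −F(α)`: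
`F(β_n) = [(2F(β_1) − F(β_0)(m − κ))(m + κ)^n + (F(β_0)(m + κ) − 2F(β_1))(m − κ)^n]/(2^{n+1}κ)`. -/
theorem hom_farey_recursive_closed_form (F : ℤ × ℤ → ℂ) (hF : IsHomFareyRecursive F)
    (β₀ α : ℤ × ℤ) (hβ₀ : Normalised β₀) (hα : Normalised α) (hnbr : FareyNbr β₀ α)
    (β : ℕ → ℤ × ℤ) (hβ : ∀ n : ℕ, β n = β₀ + n • α)
    (κ m : ℂ) (hκ : κ ≠ 0) (hκ2 : κ ^ 2 = F α ^ 2 - 4) (hm : m = -F α) :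
    ∀ n : ℕ, F (β n) =
      ((2 * F (β 1) - F (β 0) * (m - κ)) * (m + κ) ^ n +
        (F (β 0) * (m + κ) - 2 * F (β 1)) * (m - κ) ^ n) / (2 ^ (n + 1) * κ) := by
  intro n
  have discrim_eq : κ ^ 2 = m ^ 2 - 4 * 1 := by rw [hκ2, hm]; ring
  have recurrence (k : ℕ) : F (β (k + 2)) = m * F (β (k + 1)) - 1 * F (β k) := by
    simpa only [hβ, hm, one_mul] using hF.apply_add_nsmul_add_two hβ₀ hα hnbr k
  rw [eq_div_iff (mul_ne_zero (pow_ne_zero _ two_ne_zero) hκ), mul_comm]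
  exact binet_of_sq_eq_discrim (x := F ∘ β) discrim_eq recurrence n
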